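/- Let b ≥ 2 be an integer, let h and N be positive integers with N ≥ h, and assume ε > 0 satisfies (2/3)·ε·⌊N/h⌋^{−1/2} ≤ 1/(b·h^5). Then for all integers M ≥ 0 and a with 0 ≤ a < b^h, for any subinterval A of [0,1] and any positive integer j_0, μ({x ∈ A : F(M + j_0, N, a·b^{−h}, (a+1)·b^{−h}, ({b^j x})_{j≥0}) > ε·√(hN)}) ≤ μ(A)·2h·exp(−ε²·b·h^5 / 529) + 2·b^{−j_0}. -/

import Mathlib

open scoped Classical

/-- `F M N α₁ α₂ x = |#{j : M ≤ j < M+N, α₁ ≤ x_j < α₂} − (α₂ − α₁)·N|`. -/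
noncomputable def F (M N : ℕ) (α₁ α₂ : ℝ) (x : ℕ → ℝ) : ℝ :=
  |(((Finset.Ico M (M + N)).filter fun j => α₁ ≤ x j ∧ x j < α₂).card : ℝ) -
    (α₂ - α₁) * N|

/-- The sequence `({b^j x})_{j ≥ 0}` of fractional parts. -/
noncomputable def bseq (b : ℕ) (x : ℝ) : ℕ → ℝ := fun j => Int.fract ((b : ℝ) ^ j * x)


open MeasureTheory

lemma pow_five_le (b h : ℕ) (hb : 2 ≤ b) (hh : 1 ≤ h) : h ^ 5 ≤ 263 * b ^ (h - 1) := by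
  have h2 : h ^ 5 ≤ 263 * 2 ^ (h - 1) := by
    obtain ⟨k, rfl⟩ : ∃ k, h = k + 1 := ⟨h - 1, by omega⟩
    simp only [Nat.add_sub_cancel]
    by_cases hk : k < 8
    · interval_cases k <;> norm_num
    · push Not at hk
      induction k, hk using Nat.le_induction with
      | base => norm_num
      | succ k hk ih =>
        have := ih (by omega)
        have h3 : (k + 1 + 1) ^ 5 ≤ 2 * (k + 1) ^ 5 := by
          obtain ⟨m, rfl⟩ : ∃ m, k = m + 8 := ⟨k - 8, by omega⟩
          ring_nf
          nlinarith [Nat.zero_le (m^2), Nat.zero_le (m^3), Nat.zero_le (m^4), Nat.zero_le (m^5)]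
        rw [pow_succ 2 k]
        omega
  exact h2.trans (Nat.mul_le_mul_left _ (Nat.pow_le_pow_left hb _))

lemma numeric (p D u s : ℝ) (hp : 0 ≤ p) (hD : 0 < D) (hpD : p ≤ 263 * D)
    (huD : 2 / 3 * u ≤ D) (hs : |s| = u / (264 * D)) :
    p * (Real.exp s - 1 - s) - |s| * u ≤ - u ^ 2 / (529 * D) := by
  have hs1 : |s| ≤ 1 / 176 := by
    rw [hs, div_le_iff₀ (by positivity)]; linarith
  have h1 := Real.exp_bound (x := s) (by linarith) (n := 3) (by norm_num)
  simp [Finset.sum_range_succ, Nat.factorial] at h1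
  have h2 := (abs_le.1 h1).2
  have h3 : Real.exp s - 1 - s ≤ s ^ 2 * 0.5013 := by
    have : |s| ^ 3 * (4 / (6 * 3)) ≤ s ^ 2 * 0.0013 := by
      rw [← sq_abs s]
      nlinarith [sq_nonneg (|s|)]
    norm_num at h2 this ⊢
    linarith
  have h4 : p * (Real.exp s - 1 - s) ≤ 263 * D * (s ^ 2 * 0.5013) := by
    calc _ ≤ p * (s ^ 2 * 0.5013) := by gcongr
      _ ≤ _ := by gcongr
  rw [← sq_abs s, hs] at h4
  rw [hs]
  have e1 : 263 * D * ((u / (264 * D)) ^ 2 * 0.5013) = (u ^ 2 / D) * (263 * 0.5013 / 264 ^ 2) := by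
    field_simp
  have e2 : u / (264 * D) * u = (u ^ 2 / D) * (1 / 264) := by field_simp
  have e3 : - u ^ 2 / (529 * D) = (u ^ 2 / D) * (- (1 / 529)) := by field_simp
  rw [e1] at h4
  rw [e2, e3]
  have : 0 ≤ u ^ 2 / D := by positivity
  norm_num at h4 ⊢
  nlinarith

/-- indicator of the block -/
noncomputable def blk (b h a : ℕ) (x : ℝ) : ℝ :=
  if (a : ℝ) / (b : ℝ) ^ h ≤ Int.fract x ∧ Int.fract x < ((a : ℝ) + 1) / (b : ℝ) ^ h then 1 else 0

noncomputable def cnt (b h a n : ℕ) (x : ℝ) : ℝ :=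
  ∑ i ∈ Finset.range n, blk b h a ((b : ℝ) ^ (h * i) * x)

lemma blk_meas (b h a : ℕ) : Measurable (blk b h a) := by
  unfold blk
  refine Measurable.ite ?_ measurable_const measurable_const
  exact (measurableSet_le measurable_const measurable_fract).inter
    (measurableSet_lt measurable_fract measurable_const)

lemma cnt_meas (b h a n : ℕ) : Measurable (cnt b h a n) := by
  unfold cnt
  exact Finset.measurable_sum _ fun i _ => (blk_meas b h a).comp (measurable_const_mul _)

lemma blk_nonneg (b h a : ℕ) (x : ℝ) : 0 ≤ blk b h a x := by unfold blk; split_ifs <;> norm_num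
lemma blk_le (b h a : ℕ) (x : ℝ) : blk b h a x ≤ 1 := by unfold blk; split_ifs <;> norm_num

lemma cnt_nonneg (b h a n : ℕ) (x : ℝ) : 0 ≤ cnt b h a n x :=
  Finset.sum_nonneg fun _ _ => blk_nonneg _ _ _ _
lemma cnt_le (b h a n : ℕ) (x : ℝ) : cnt b h a n x ≤ n := by
  unfold cnt
  refine (Finset.sum_le_sum fun i _ => blk_le _ _ _ _).trans ?_
  simp

lemma cnt_succ (b h a n : ℕ) (x : ℝ) :
    cnt b h a (n + 1) x = blk b h a x + cnt b h a n ((b : ℝ) ^ h * x) := by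
  unfold cnt
  rw [Finset.sum_range_succ', add_comm]
  simp only [mul_zero, pow_zero, one_mul]
  congr 1
  refine Finset.sum_congr rfl fun i _ => ?_
  rw [mul_add, pow_add]; congr 1; ring

lemma cnt_per (b h a n : ℕ) : Function.Periodic (cnt b h a n) 1 := by
  intro x
  unfold cnt
  refine Finset.sum_congr rfl fun i _ => ?_
  unfold blk
  have : Int.fract ((b : ℝ) ^ (h * i) * (x + 1)) = Int.fract ((b : ℝ) ^ (h * i) * x) := by
    rw [mul_add, mul_one]
    have := Int.fract_add_natCast ((b : ℝ) ^ (h * i) * x) (b ^ (h * i))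
    push_cast at this
    exact this
  rw [this]

lemma W_ii (b h a n : ℕ) (s c u v : ℝ) :
    IntervalIntegrable (fun x => Real.exp (s * cnt b h a n (c * x))) volume u v := by
  have hm : Measurable (fun x => Real.exp (s * cnt b h a n (c * x))) :=
    Real.measurable_exp.comp (((cnt_meas b h a n).comp (measurable_const_mul c)).const_mul s)
  refine (intervalIntegrable_const (c := Real.exp (|s| * n))).mono_fun hm.aestronglyMeasurable ?_
  refine Filter.Eventually.of_forall fun x => ?_
  simp only [Real.norm_eq_abs, Real.abs_exp]
  apply Real.exp_le_exp.2
  calc s * cnt b h a n (c * x) ≤ |s| * cnt b h a n (c * x) := by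
        gcongr
        · exact cnt_nonneg _ _ _ _ _
        · exact le_abs_self s
    _ ≤ _ := by gcongr; exact cnt_le _ _ _ _ _

lemma W_per_int (b h a n : ℕ) (s : ℝ) (m k : ℕ) (c : ℤ) (hm : 0 < m) (hk : 0 < k) :
    ∫ x in ((c : ℝ) / k)..(((c : ℝ) + 1) / k), Real.exp (s * cnt b h a n (((m * k : ℕ) : ℝ) * x))
      = (1 / (k : ℝ)) * ∫ x in (0 : ℝ)..1, Real.exp (s * cnt b h a n x) := by
  have hk' : (k : ℝ) ≠ 0 := by positivity
  have hm' : (m : ℝ) ≠ 0 := by positivity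
  have hp : Function.Periodic (fun x => Real.exp (s * cnt b h a n x)) 1 := by
    intro x; simp only [cnt_per b h a n x]
  rw [intervalIntegral.integral_comp_mul_left (fun x => Real.exp (s * cnt b h a n x))
    (by push_cast; positivity)]
  have e1 : ((m * k : ℕ) : ℝ) * ((c : ℝ) / k) = m * c := by push_cast; field_simp
  have e2 : ((m * k : ℕ) : ℝ) * (((c : ℝ) + 1) / k) = m * c + (m : ℤ) • (1 : ℝ) := by
    push_cast; simp; field_simp
  rw [e1, e2, hp.intervalIntegral_add_zsmul_eq _ _]
  · push_cast
    simp
    field_simp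
    rw [hp.intervalIntegral_add_eq _ 0, zero_add]
  · intro t₁ t₂
    simpa using W_ii b h a n s 1 t₁ t₂

lemma mgf (b h a n : ℕ) (s : ℝ) (hb : 2 ≤ b) (ha : a < b ^ h) :
    ∫ x in (0 : ℝ)..1, Real.exp (s * cnt b h a n x)
      = (1 + (1 / (b : ℝ) ^ h) * (Real.exp s - 1)) ^ n := by
  induction n with
  | zero => simp [cnt]
  | succ n ih =>
    have hb0 : 0 < b ^ h := by positivity
    set I := ∫ x in (0 : ℝ)..1, Real.exp (s * cnt b h a n x) with hI
    set q : ℝ := (b : ℝ) ^ h with hq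
    have hq0 : 0 < q := by positivity
    set α : ℝ := (a : ℝ) / q with hα
    set β : ℝ := ((a : ℝ) + 1) / q with hβ
    have haq : (a : ℝ) + 1 ≤ q := by rw [hq]; exact_mod_cast ha
    have h0α : 0 ≤ α := by positivity
    have hαβ : α ≤ β := by rw [hα, hβ]; gcongr; linarith
    have hβ1 : β ≤ 1 := by rw [hβ, div_le_one hq0]; exact haq
    have hii : ∀ u v, IntervalIntegrable (fun x => Real.exp (s * cnt b h a (n + 1) x)) volume u v := by
      intro u v; simpa using W_ii b h a (n + 1) s 1 u v
    have hii' : ∀ u v, IntervalIntegrable (fun x => Real.exp (s * cnt b h a n (q * x))) volume u v :=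
      W_ii b h a n s q
    have e1 : ∫ x in α..β, Real.exp (s * cnt b h a n (q * x)) = (1 / q) * I := by
      have := W_per_int b h a n s 1 (b ^ h) a one_pos hb0
      push_cast at this
      simpa [hα, hβ, hq, hI] using this
    have e2 : ∫ x in (0 : ℝ)..1, Real.exp (s * cnt b h a n (q * x)) = I := by
      have := W_per_int b h a n s (b ^ h) 1 0 hb0 one_pos
      push_cast at this
      simpa [hq, hI] using this
    have c1 : ∫ x in (0 : ℝ)..α, Real.exp (s * cnt b h a (n + 1) x) =
        ∫ x in (0 : ℝ)..α, Real.exp (s * cnt b h a n (q * x)) := by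
      refine intervalIntegral.integral_congr_Ioo_of_le h0α fun x hx => ?_
      have hf : Int.fract x = x := Int.fract_eq_self.2 ⟨hx.1.le, by linarith [hx.2]⟩
      simp only [cnt_succ, blk, hf]
      rw [if_neg (fun hh => absurd hx.2 (not_lt.2 hh.1)), zero_add]
    have c3 : ∫ x in β..1, Real.exp (s * cnt b h a (n + 1) x) =
        ∫ x in β..1, Real.exp (s * cnt b h a n (q * x)) := by
      refine intervalIntegral.integral_congr_Ioo_of_le hβ1 fun x hx => ?_
      have hf : Int.fract x = x := Int.fract_eq_self.2 ⟨by linarith [hx.1], by linarith [hx.2]⟩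
      simp only [cnt_succ, blk, hf]
      rw [if_neg (fun hh => absurd hx.1 (not_lt.2 hh.2.le)), zero_add]
    have c2 : ∫ x in α..β, Real.exp (s * cnt b h a (n + 1) x) =
        Real.exp s * ∫ x in α..β, Real.exp (s * cnt b h a n (q * x)) := by
      rw [← intervalIntegral.integral_const_mul]
      refine intervalIntegral.integral_congr_Ioo_of_le hαβ fun x hx => ?_
      have hf : Int.fract x = x := Int.fract_eq_self.2 ⟨by linarith [hx.1], by linarith [hx.2]⟩
      simp only [cnt_succ, blk, hf]
      rw [if_pos ⟨hx.1.le, hx.2⟩, mul_add, Real.exp_add, mul_one]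
    rw [← intervalIntegral.integral_add_adjacent_intervals (hii 0 α) (hii α 1),
      ← intervalIntegral.integral_add_adjacent_intervals (hii α β) (hii β 1), c1, c2, c3]
    rw [← intervalIntegral.integral_add_adjacent_intervals (hii' 0 α) (hii' α 1),
      ← intervalIntegral.integral_add_adjacent_intervals (hii' α β) (hii' β 1), e1] at e2
    rw [e1, pow_succ, ← ih]
    linear_combination e2

/-- one-sided tail on a cell; `s` may have any sign -/
lemma tail (b h a n : ℕ) (s t : ℝ) (hb : 2 ≤ b) (ha : a < b ^ h) (m k : ℕ) (c : ℤ)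
    (hm : 0 < m) (hk : 0 < k) :
    volume.real {x ∈ Set.Ioc ((c : ℝ) / k) (((c : ℝ) + 1) / k) |
        t ≤ s * (cnt b h a n (((m * k : ℕ) : ℝ) * x) - n * (1 / (b : ℝ) ^ h))}
      ≤ (1 / (k : ℝ)) *
        Real.exp (n * ((1 / (b : ℝ) ^ h) * (Real.exp s - 1 - s)) - t) := by
  set p : ℝ := 1 / (b : ℝ) ^ h with hp
  have hp0 : 0 ≤ p := by positivity
  have hp1 : p ≤ 1 := by
    rw [hp, div_le_one (by positivity)]
    exact one_le_pow₀ (by exact_mod_cast (by omega : 1 ≤ b))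
  have hle : (c : ℝ) / k ≤ ((c : ℝ) + 1) / k := by gcongr; linarith
  have hWint := W_per_int b h a n s m k c hm hk
  rw [mgf b h a n s hb ha, intervalIntegral.integral_of_le hle] at hWint
  rw [← hp] at hWint
  clear_value p
  have hii := (intervalIntegrable_iff_integrableOn_Ioc_of_le hle).1
    (W_ii b h a n s ((m * k : ℕ) : ℝ) ((c : ℝ) / k) (((c : ℝ) + 1) / k))
  have mk := mul_meas_ge_le_integral_of_nonneg
    (μ := volume.restrict (Set.Ioc ((c : ℝ) / k) (((c : ℝ) + 1) / k)))
    (Filter.Eventually.of_forall fun x => (Real.exp_pos _).le) hii (Real.exp (t + s * (n * p)))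
  rw [hWint, measureReal_restrict_apply' measurableSet_Ioc] at mk
  have hset : {x ∈ Set.Ioc ((c : ℝ) / k) (((c : ℝ) + 1) / k) |
        t ≤ s * (cnt b h a n (((m * k : ℕ) : ℝ) * x) - n * p)} =
      {x | Real.exp (t + s * (n * p)) ≤ Real.exp (s * cnt b h a n (((m * k : ℕ) : ℝ) * x))} ∩
        Set.Ioc ((c : ℝ) / k) (((c : ℝ) + 1) / k) := by
    ext x
    simp only [Set.mem_ofPred_eq, Set.mem_inter_iff, Real.exp_le_exp]
    constructor
    · rintro ⟨h1, h2⟩; exact ⟨by linarith, h1⟩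
    · rintro ⟨h1, h2⟩; exact ⟨h2, by linarith⟩
  rw [hset]
  have hpow : (1 + p * (Real.exp s - 1)) ^ n ≤ Real.exp (n * (p * (Real.exp s - 1))) := by
    rw [Real.exp_nat_mul]
    refine pow_le_pow_left₀ ?_ ?_ n
    · nlinarith [Real.exp_pos s]
    · linarith [Real.add_one_le_exp (p * (Real.exp s - 1))]
  have e : n * (p * (Real.exp s - 1 - s)) - t =
      n * (p * (Real.exp s - 1)) - (t + s * (n * p)) := by ring
  rw [e, Real.exp_sub, ← mul_div_assoc, le_div_iff₀ (Real.exp_pos _), mul_comm]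
  refine mk.trans ?_
  gcongr

/-- the covering step -/
lemma cover (A B : Set ℝ) (hA : A ⊆ Set.Icc (0 : ℝ) 1) (hA' : A.OrdConnected) (k : ℕ) (hk : 0 < k)
    (P : ℝ) (hP : 0 ≤ P)
    (hB : ∀ c : ℤ, volume.real {x ∈ Set.Ioc ((c : ℝ) / k) (((c : ℝ) + 1) / k) | x ∈ B}
      ≤ (1 / (k : ℝ)) * P) :
    volume.real {x ∈ A | x ∈ B} ≤ volume.real A * P + 2 * (k : ℝ)⁻¹ := by
  have hk' : (0 : ℝ) < k := by positivity
  rcases A.eq_empty_or_nonempty with rfl | hne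
  · simp
  have hbb : BddBelow A := ⟨0, fun x hx => (hA hx).1⟩
  have hba : BddAbove A := ⟨1, fun x hx => (hA hx).2⟩
  set α := sInf A
  set β := sSup A
  have hsub : A ⊆ Set.Icc α β := fun x hx => ⟨csInf_le hbb hx, le_csSup hba hx⟩
  have hsup : Set.Ioo α β ⊆ A := by
    intro x hx
    obtain ⟨y, hy, hyx⟩ := exists_lt_of_csInf_lt hne hx.1
    obtain ⟨z, hz, hxz⟩ := exists_lt_of_lt_csSup hne hx.2
    exact hA'.out hy hz ⟨hyx.le, hxz.le⟩
  have hαβ : α ≤ β := by obtain ⟨x, hx⟩ := hne; exact (hsub hx).1.trans (hsub hx).2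
  have hAfin : volume A ≠ ⊤ := ne_top_of_le_ne_top (by simp) (measure_mono hsub)
  have hvol : β - α ≤ volume.real A := by
    have := measureReal_mono hsup hAfin
    rwa [Real.volume_real_Ioo_of_le hαβ] at this
  set c1 : ℤ := ⌈α * k⌉
  set c2 : ℤ := ⌊β * k⌋
  have hc1 : (c1 : ℝ) / k - α ≤ 1 / k := by
    have := Int.ceil_lt_add_one (α * k)
    rw [sub_le_iff_le_add, div_le_iff₀ hk', add_mul, one_div, inv_mul_cancel₀ hk'.ne']
    linarith
  have hc1' : α ≤ (c1 : ℝ) / k := by rw [le_div_iff₀ hk']; exact Int.le_ceil _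
  have hc2 : β - (c2 : ℝ) / k ≤ 1 / k := by
    have := Int.lt_floor_add_one (β * k)
    rw [sub_le_iff_le_add, ← add_div, le_div_iff₀ hk']
    linarith
  have hc2' : (c2 : ℝ) / k ≤ β := by rw [div_le_iff₀ hk']; exact Int.floor_le _
  have hcov : {x ∈ A | x ∈ B} ⊆ (Set.Icc α ((c1 : ℝ) / k) ∪ Set.Icc ((c2 : ℝ) / k) β) ∪
      ⋃ c ∈ Finset.Ico c1 c2, {x ∈ Set.Ioc ((c : ℝ) / k) (((c : ℝ) + 1) / k) | x ∈ B} := by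
    rintro x ⟨hxA, hxB⟩
    have hx := hsub hxA
    by_cases h1 : x ≤ (c1 : ℝ) / k
    · exact Or.inl (Or.inl ⟨hx.1, h1⟩)
    by_cases h2 : (c2 : ℝ) / k ≤ x
    · exact Or.inl (Or.inr ⟨h2, hx.2⟩)
    push Not at h1 h2
    right
    simp only [Set.mem_iUnion]
    rw [div_lt_iff₀ hk'] at h1
    rw [lt_div_iff₀ hk'] at h2
    have g1 : c1 < ⌈x * k⌉ := Int.lt_ceil.2 h1
    have g2 : ⌈x * k⌉ ≤ c2 := Int.ceil_le.2 h2.le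
    refine ⟨⌈x * k⌉ - 1, Finset.mem_Ico.2 ⟨by omega, by omega⟩, ⟨?_, ?_⟩, hxB⟩
    · rw [div_lt_iff₀ hk']; push_cast; linarith [Int.ceil_lt_add_one (x * k)]
    · rw [le_div_iff₀ hk']; push_cast; linarith [Int.le_ceil (x * k)]
  have hfin : ∀ c : ℤ, volume {x ∈ Set.Ioc ((c : ℝ) / k) (((c : ℝ) + 1) / k) | x ∈ B} ≠ ⊤ :=
    fun c => ne_top_of_le_ne_top (by simp : volume (Set.Ioc ((c : ℝ) / k) (((c : ℝ) + 1) / k)) ≠ ⊤)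
      (measure_mono fun x hx => hx.1)
  have hUfin : volume (⋃ c ∈ Finset.Ico c1 c2,
      {x ∈ Set.Ioc ((c : ℝ) / k) (((c : ℝ) + 1) / k) | x ∈ B}) ≠ ⊤ :=
    ne_top_of_le_ne_top (ENNReal.sum_ne_top.2 fun c _ => hfin c) (measure_biUnion_finset_le _ _)
  have hcard : ((Finset.Ico c1 c2).card : ℝ) * (1 / k) ≤ volume.real A := by
    rw [Int.card_Ico]
    rcases le_total c1 c2 with hc | hc
    · have : (((c2 - c1).toNat : ℕ) : ℝ) = c2 - c1 := by
        have := Int.toNat_of_nonneg (sub_nonneg.2 hc)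
        exact_mod_cast this
      rw [this]
      calc ((c2 : ℝ) - c1) * (1 / k) = (c2 : ℝ) / k - c1 / k := by ring
        _ ≤ β - α := by linarith
        _ ≤ _ := hvol
    · rw [Int.toNat_of_nonpos (by omega)]; simp
  have hU : volume.real (⋃ c ∈ Finset.Ico c1 c2,
      {x ∈ Set.Ioc ((c : ℝ) / k) (((c : ℝ) + 1) / k) | x ∈ B}) ≤ volume.real A * P := by
    calc _ ≤ ∑ c ∈ Finset.Ico c1 c2,
          volume.real {x ∈ Set.Ioc ((c : ℝ) / k) (((c : ℝ) + 1) / k) | x ∈ B} :=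
          measureReal_biUnion_finset_le _ _
      _ ≤ ∑ c ∈ Finset.Ico c1 c2, (1 / (k : ℝ)) * P := Finset.sum_le_sum fun c _ => hB c
      _ = ((Finset.Ico c1 c2).card : ℝ) * (1 / k) * P := by
          rw [Finset.sum_const, nsmul_eq_mul, mul_assoc]
      _ ≤ _ := by gcongr
  have hI : volume.real (Set.Icc α ((c1 : ℝ) / k) ∪ Set.Icc ((c2 : ℝ) / k) β) ≤ 2 * (k : ℝ)⁻¹ := by
    refine (measureReal_union_le _ _).trans ?_
    rw [Real.volume_real_Icc_of_le hc1', Real.volume_real_Icc_of_le hc2']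
    rw [one_div] at hc1 hc2
    linarith
  refine (measureReal_mono hcov (measure_union_ne_top (measure_union_ne_top (by simp) (by simp))
    hUfin)).trans ?_
  refine (measureReal_union_le _ _).trans ?_
  linarith

/-- two-sided tail on a cell with the final constants -/
lemma tail_two (b h a n : ℕ) (ε D : ℝ) (hb : 2 ≤ b) (ha : a < b ^ h) (hn : 1 ≤ n) (hε : 0 < ε)
    (hD : 0 < D) (hpD : 1 / (b : ℝ) ^ h ≤ 263 * D) (hcr : 2 / 3 * (ε / √(n : ℝ)) ≤ D)
    (m k : ℕ) (c : ℤ) (hm : 0 < m) (hk : 0 < k) :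
    volume.real {x ∈ Set.Ioc ((c : ℝ) / k) (((c : ℝ) + 1) / k) |
        ε * √(n : ℝ) < |cnt b h a n (((m * k : ℕ) : ℝ) * x) - n * (1 / (b : ℝ) ^ h)|}
      ≤ (1 / (k : ℝ)) * (2 * Real.exp (- ε ^ 2 / (529 * D))) := by
  have hn0 : (0 : ℝ) < n := by exact_mod_cast hn
  have hsq : 0 < √(n : ℝ) := Real.sqrt_pos.2 hn0
  have hsq2 : √(n : ℝ) * √(n : ℝ) = n := Real.mul_self_sqrt hn0.le
  set u : ℝ := ε / √(n : ℝ) with hu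
  have hu0 : 0 < u := by positivity
  set s : ℝ := u / (264 * D) with hs
  have hs0 : 0 < s := by positivity
  set p : ℝ := 1 / (b : ℝ) ^ h with hp
  have hp0 : 0 ≤ p := by positivity
  have eε : ε = u * √(n : ℝ) := by rw [hu]; field_simp
  have ht : ε * √(n : ℝ) = n * u := by rw [eε, mul_assoc, hsq2]; ring
  have he2 : ε ^ 2 = n * u ^ 2 := by rw [eε, mul_pow, sq √(n : ℝ), hsq2]; ring
  have key : ∀ s' : ℝ, |s'| = s →
      volume.real {x ∈ Set.Ioc ((c : ℝ) / k) (((c : ℝ) + 1) / k) |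
        s * (ε * √(n : ℝ)) ≤ s' * (cnt b h a n (((m * k : ℕ) : ℝ) * x) - n * p)}
      ≤ (1 / (k : ℝ)) * Real.exp (- ε ^ 2 / (529 * D)) := by
    intro s' hs'
    refine (tail b h a n s' _ hb ha m k c hm hk).trans ?_
    gcongr
    have := numeric p D u s' hp0 hD hpD hcr hs'
    rw [← hp, ht, he2]
    rw [hs'] at this
    have h2 := mul_le_mul_of_nonneg_left this hn0.le
    calc _ = n * (p * (Real.exp s' - 1 - s') - s * u) := by ring
      _ ≤ _ := h2
      _ = _ := by ring
  have k1 := key s (abs_of_pos hs0)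
  have k2 := key (-s) (by rw [abs_neg, abs_of_pos hs0])
  have hfin : ∀ Q : ℝ → Prop, volume {x ∈ Set.Ioc ((c : ℝ) / k) (((c : ℝ) + 1) / k) | Q x} ≠ ⊤ :=
    fun Q => ne_top_of_le_ne_top (by simp : volume (Set.Ioc ((c : ℝ) / k) (((c : ℝ) + 1) / k)) ≠ ⊤)
      (measure_mono fun x hx => hx.1)
  refine (measureReal_mono (s₂ := {x ∈ Set.Ioc ((c : ℝ) / k) (((c : ℝ) + 1) / k) |
        s * (ε * √(n : ℝ)) ≤ s * (cnt b h a n (((m * k : ℕ) : ℝ) * x) - n * p)} ∪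
      {x ∈ Set.Ioc ((c : ℝ) / k) (((c : ℝ) + 1) / k) |
        s * (ε * √(n : ℝ)) ≤ (-s) * (cnt b h a n (((m * k : ℕ) : ℝ) * x) - n * p)}) ?_
    (measure_union_ne_top (hfin _) (hfin _))).trans ?_
  · rintro x ⟨hx, hx2⟩
    rcases lt_abs.1 hx2 with h1 | h1
    · exact Or.inl ⟨hx, mul_le_mul_of_nonneg_left h1.le hs0.le⟩
    · refine Or.inr ⟨hx, ?_⟩
      rw [neg_mul, ← mul_neg]
      exact mul_le_mul_of_nonneg_left h1.le hs0.le
  · refine (measureReal_union_le _ _).trans ?_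
    linarith

/-- number of `i` with `r + h i < N` -/
def csz (h N r : ℕ) : ℕ := (N + h - 1 - r) / h

lemma sum_classes (h N : ℕ) (hh : 1 ≤ h) (f : ℕ → ℝ) :
    ∑ j ∈ Finset.range N, f j =
      ∑ r ∈ Finset.range h, ∑ i ∈ Finset.range (csz h N r), f (r + h * i) := by
  rw [← Finset.sum_fiberwise_of_maps_to (s := Finset.range N) (t := Finset.range h)
    (g := fun j => j % h) (fun j _ => Finset.mem_range.2 (Nat.mod_lt _ hh))]
  refine Finset.sum_congr rfl fun r hr => ?_
  have hr' := Finset.mem_range.1 hr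
  have hmem : ∀ i, i < csz h N r ↔ r + h * i < N := by
    intro i
    unfold csz
    rw [← Nat.succ_le_iff, Nat.le_div_iff_mul_le hh, Nat.succ_mul, mul_comm i h]
    omega
  refine Finset.sum_nbij' (fun j => j / h) (fun i => r + h * i) ?_ ?_ ?_ ?_ ?_
  · intro j hj
    rw [Finset.mem_filter, Finset.mem_range] at hj
    rw [Finset.mem_range, hmem, ← hj.2, Nat.mod_add_div]
    exact hj.1
  · intro i hi
    rw [Finset.mem_range, hmem] at hi
    rw [Finset.mem_filter, Finset.mem_range]
    exact ⟨hi, by rw [Nat.add_mul_mod_self_left, Nat.mod_eq_of_lt hr']⟩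
  · intro j hj
    rw [Finset.mem_filter] at hj
    show r + h * (j / h) = j
    rw [← hj.2, Nat.mod_add_div]
  · intro i hi
    show (r + h * i) / h = i
    rw [Nat.add_mul_div_left _ _ hh, Nat.div_eq_of_lt hr', zero_add]
  · intro j hj
    rw [Finset.mem_filter] at hj
    show f j = f (r + h * (j / h))
    rw [← hj.2, Nat.mod_add_div]

lemma csz_ge (h N r : ℕ) (hr : r < h) : N / h ≤ csz h N r := by
  unfold csz
  exact Nat.div_le_div_right (by omega)

lemma csz_sum (h N : ℕ) (hh : 1 ≤ h) :
    ∑ r ∈ Finset.range h, (csz h N r : ℝ) = N := by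
  have := sum_classes h N hh (fun _ => 1)
  simpa using this.symm

lemma sqrt_sum (h N : ℕ) (hh : 1 ≤ h) :
    ∑ r ∈ Finset.range h, √(csz h N r : ℝ) ≤ √((h : ℝ) * N) := by
  apply Real.le_sqrt_of_sq_le
  have := sq_sum_le_card_mul_sum_sq (s := Finset.range h) (f := fun r => √(csz h N r : ℝ))
  refine this.trans (le_of_eq ?_)
  simp only [Real.sq_sqrt (Nat.cast_nonneg _), csz_sum h N hh, Finset.card_range]

lemma F_eq (b h N K a : ℕ) (hh : 1 ≤ h) (x : ℝ) :
    F K N ((a : ℝ) / (b : ℝ) ^ h) (((a : ℝ) + 1) / (b : ℝ) ^ h) (bseq b x) =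
      |∑ r ∈ Finset.range h,
        (cnt b h a (csz h N r) ((b : ℝ) ^ (K + r) * x) - csz h N r * (1 / (b : ℝ) ^ h))| := by
  unfold F
  congr 1
  rw [Finset.sum_sub_distrib, ← Finset.sum_mul, csz_sum h N hh]
  congr 1
  · rw [Finset.card_filter, Finset.sum_Ico_eq_sum_range]
    push_cast
    rw [Nat.add_sub_cancel_left, sum_classes h N hh]
    refine Finset.sum_congr rfl fun r _ => Finset.sum_congr rfl fun i _ => ?_
    unfold blk bseq
    have : (b : ℝ) ^ (h * i) * ((b : ℝ) ^ (K + r) * x) = (b : ℝ) ^ (K + (r + h * i)) * x := by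
      rw [← mul_assoc, ← pow_add]; congr 2; ring
    rw [this]
  · ring

theorem stmt4 (b h N : ℕ) (hb : 2 ≤ b) (hh : 1 ≤ h) (hN : h ≤ N)
    (ε : ℝ) (hε : 0 < ε)
    (hcrit : 2 / 3 * ε / Real.sqrt ((N / h : ℕ) : ℝ) ≤ 1 / ((b : ℝ) * (h : ℝ) ^ 5))
    (M a : ℕ) (ha : a < b ^ h)
    (A : Set ℝ) (hA : A ⊆ Set.Icc (0 : ℝ) 1) (hA' : A.OrdConnected)
    (j₀ : ℕ) (hj₀ : 1 ≤ j₀) :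
    MeasureTheory.volume {x ∈ A |
        ε * Real.sqrt ((h : ℝ) * N) <
          F (M + j₀) N ((a : ℝ) / (b : ℝ) ^ h) (((a : ℝ) + 1) / (b : ℝ) ^ h) (bseq b x)} ≤
      ENNReal.ofReal ((MeasureTheory.volume A).toReal * 2 * h *
          Real.exp (-ε ^ 2 * (b : ℝ) * (h : ℝ) ^ 5 / 529) +
        2 * ((b : ℝ) ^ j₀)⁻¹) := by
  have hb0 : (0 : ℝ) < b := by positivity
  have hh0 : (0 : ℝ) < h := by exact_mod_cast hh
  set D : ℝ := 1 / ((b : ℝ) * (h : ℝ) ^ 5) with hDdef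
  have hD : 0 < D := by positivity
  have hpD : 1 / (b : ℝ) ^ h ≤ 263 * D := by
    have h1 := pow_five_le b h hb hh
    have h2 : (h : ℝ) ^ 5 ≤ 263 * (b : ℝ) ^ (h - 1) := by exact_mod_cast h1
    have h3 : (b : ℝ) ^ h = (b : ℝ) ^ (h - 1) * b := by
      rw [← pow_succ, Nat.sub_add_cancel hh]
    rw [hDdef, mul_one_div, div_le_div_iff₀ (by positivity) (by positivity), h3]
    nlinarith
  have hq1 : 1 ≤ N / h := (Nat.one_le_div_iff hh).2 hN
  set Q : ℝ := Real.exp (-ε ^ 2 * (b : ℝ) * (h : ℝ) ^ 5 / 529) with hQ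
  have hQ' : Real.exp (- ε ^ 2 / (529 * D)) = Q := by
    rw [hQ, hDdef]; congr 1; field_simp
  set B : Set ℝ := {x | ε * Real.sqrt ((h : ℝ) * N) <
          F (M + j₀) N ((a : ℝ) / (b : ℝ) ^ h) (((a : ℝ) + 1) / (b : ℝ) ^ h) (bseq b x)} with hB
  have hk : 0 < b ^ j₀ := by positivity
  have hcell : ∀ c : ℤ, volume.real {x ∈ Set.Ioc ((c : ℝ) / (b ^ j₀ : ℕ))
      (((c : ℝ) + 1) / (b ^ j₀ : ℕ)) | x ∈ B} ≤ (1 / ((b ^ j₀ : ℕ) : ℝ)) * (2 * h * Q) := by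
    intro c
    have hone : ∀ r ∈ Finset.range h, volume.real {x ∈ Set.Ioc ((c : ℝ) / (b ^ j₀ : ℕ))
        (((c : ℝ) + 1) / (b ^ j₀ : ℕ)) | ε * √(csz h N r : ℝ) <
          |cnt b h a (csz h N r) (((b ^ (M + r) * b ^ j₀ : ℕ) : ℝ) * x) -
            csz h N r * (1 / (b : ℝ) ^ h)|} ≤ (1 / ((b ^ j₀ : ℕ) : ℝ)) * (2 * Q) := by
      intro r hr
      have hge := csz_ge h N r (Finset.mem_range.1 hr)
      rw [← hQ']
      refine tail_two b h a (csz h N r) ε D hb ha (hq1.trans hge) hε hD hpD ?_ _ _ c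
        (by positivity) hk
      refine le_trans ?_ hcrit
      rw [mul_div_assoc]
      have : (0 : ℝ) < ((N / h : ℕ) : ℝ) := by exact_mod_cast hq1
      gcongr
    have hsub : {x ∈ Set.Ioc ((c : ℝ) / (b ^ j₀ : ℕ)) (((c : ℝ) + 1) / (b ^ j₀ : ℕ)) | x ∈ B} ⊆
        ⋃ r ∈ Finset.range h, {x ∈ Set.Ioc ((c : ℝ) / (b ^ j₀ : ℕ))
        (((c : ℝ) + 1) / (b ^ j₀ : ℕ)) | ε * √(csz h N r : ℝ) <
          |cnt b h a (csz h N r) (((b ^ (M + r) * b ^ j₀ : ℕ) : ℝ) * x) -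
            csz h N r * (1 / (b : ℝ) ^ h)|} := by
      rintro x ⟨hx, hxB⟩
      by_contra hcon
      simp only [Set.mem_iUnion, not_exists] at hcon
      have hall : ∀ r ∈ Finset.range h, |cnt b h a (csz h N r) ((b : ℝ) ^ (M + j₀ + r) * x) -
            csz h N r * (1 / (b : ℝ) ^ h)| ≤ ε * √(csz h N r : ℝ) := by
        intro r hr
        by_contra hlt
        push Not at hlt
        refine hcon r hr ⟨hx, ?_⟩
        have e : ((b ^ (M + r) * b ^ j₀ : ℕ) : ℝ) = (b : ℝ) ^ (M + j₀ + r) := by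
          push_cast; rw [← pow_add]; congr 1; ring
        rw [e]; exact hlt
      have hxB' : ε * Real.sqrt ((h : ℝ) * N) <
          F (M + j₀) N ((a : ℝ) / (b : ℝ) ^ h) (((a : ℝ) + 1) / (b : ℝ) ^ h) (bseq b x) := hxB
      rw [F_eq b h N (M + j₀) a hh x] at hxB'
      have h1 := (Finset.abs_sum_le_sum_abs _ _).trans (Finset.sum_le_sum hall)
      rw [← Finset.mul_sum] at h1
      have h2 := mul_le_mul_of_nonneg_left (sqrt_sum h N hh) hε.le
      linarith
    have hfin : ∀ R : ℝ → Prop, volume {x ∈ Set.Ioc ((c : ℝ) / (b ^ j₀ : ℕ))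
        (((c : ℝ) + 1) / (b ^ j₀ : ℕ)) | R x} ≠ ⊤ :=
      fun R => ne_top_of_le_ne_top (by simp : volume (Set.Ioc ((c : ℝ) / (b ^ j₀ : ℕ))
        (((c : ℝ) + 1) / (b ^ j₀ : ℕ))) ≠ ⊤) (measure_mono fun x hx => hx.1)
    refine (measureReal_mono hsub (ne_top_of_le_ne_top
      (ENNReal.sum_ne_top.2 fun r _ => hfin _) (measure_biUnion_finset_le _ _))).trans ?_
    refine (measureReal_biUnion_finset_le _ _).trans ((Finset.sum_le_sum hone).trans ?_)
    rw [Finset.sum_const, Finset.card_range, nsmul_eq_mul]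
    exact le_of_eq (by ring)
  have hfinal := cover A B hA hA' (b ^ j₀) hk (2 * h * Q) (by positivity) hcell
  have hne : volume {x ∈ A | x ∈ B} ≠ ⊤ :=
    ne_top_of_le_ne_top (by simp : volume (Set.Icc (0 : ℝ) 1) ≠ ⊤)
      (measure_mono fun x hx => hA hx.1)
  have hgoal : volume {x ∈ A | x ∈ B} ≤
      ENNReal.ofReal ((volume A).toReal * 2 * h * Q + 2 * ((b : ℝ) ^ j₀)⁻¹) := by
    rw [← ENNReal.ofReal_toReal hne]
    apply ENNReal.ofReal_le_ofReal
    refine hfinal.trans (le_of_eq ?_)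
    rw [measureReal_def]
    push_cast
    ring
  exact hgoal
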